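/- Let p be an odd prime, k ≥ 1 an integer, K a field of characteristic p, A = K[x]/(x^{kp}), and B = A ⊗_K A. The graded ring HH^*(A;A) = ⊕_{m≥0} Ext^m_B(A,A), with the Yoneda (composition) product, is isomorphic as a graded ring to K[x,v,t]/(x^{kp}, v²), where x, v, t have cohomological degrees 0, 1, 2 respectively. -/

import Mathlib

open Polynomial TensorProduct CategoryTheory

noncomputable section

/-- `A = K[x]/(x^N)`, the truncated polynomial ring over the field `K`. -/
abbrev A (K : Type) [Field K] (N : ℕ) : Type := AdjoinRoot ((X : K[X]) ^ N)

/-- `B = A ⊗_K A`. -/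
abbrev B (K : Type) [Field K] (N : ℕ) : Type := A K N ⊗[K] A K N

/-- `A` is a `B`-module via the multiplication map `μ(a ⊗ b) = ab`. -/
instance (K : Type) [Field K] (N : ℕ) : Algebra (B K N) (A K N) :=
  (Algebra.TensorProduct.lmul' K (S := A K N)).toRingHom.toAlgebra

instance (K : Type) [Field K] (N : ℕ) : HasDerivedCategory.{1} (ModuleCat.{0} (B K N)) :=
  HasDerivedCategory.standard _

instance (K : Type) [Field K] (N : ℕ) : HasExt.{1} (ModuleCat.{0} (B K N)) :=
  hasExt_of_hasDerivedCategory _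

/-- `A` as an object of the category of `B`-modules. -/
def M (K : Type) [Field K] (N : ℕ) : ModuleCat.{0} (B K N) := ModuleCat.of (B K N) (A K N)

/-- The ideal `(x^N, v²)` of `K[x,v,t]`, where `x = X 0`, `v = X 1`, `t = X 2`. -/
def I (K : Type) [Field K] (N : ℕ) : Ideal (MvPolynomial (Fin 3) K) :=
  Ideal.span {MvPolynomial.X 0 ^ N, MvPolynomial.X 1 ^ 2}

/-- The ring `K[x,v,t]/(x^N, v²)`. -/
abbrev R (K : Type) [Field K] (N : ℕ) : Type := MvPolynomial (Fin 3) K ⧸ I K N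

/-- The degree-`m` component of `R K N`, for the grading in which `x, v, t` have
cohomological degrees `0, 1, 2` respectively. -/
def G (K : Type) [Field K] (N m : ℕ) : Submodule K (R K N) :=
  (MvPolynomial.weightedHomogeneousSubmodule K (![0, 1, 2] : Fin 3 → ℕ) m).map
    (Ideal.Quotient.mkₐ K (I K N)).toLinearMap

section Abs
universe w v u
open Abelian

variable {C : Type u} [Category.{v} C] [Abelian C] [HasExt.{w} C]

/-- precomposition with the extension class is bijective. -/
theorem precomp_extClass_bij {S : ShortComplex C} (hS : S.ShortExact) [Projective S.X₂] (Y : C)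
    (h0 : ∀ f : S.X₂ ⟶ Y, S.f ≫ f = 0) {m n : ℕ} (h : 1 + m = n) :
    Function.Bijective (fun α : Ext S.X₁ Y m => hS.extClass.comp α h) := by
  constructor
  · intro α β hab
    have hz : hS.extClass.comp (α - β) h = 0 := by
      have := (hS.extClass.precomp Y h).map_sub α β
      change hS.extClass.comp (α - β) h = hS.extClass.comp α h - hS.extClass.comp β h at this
      rw [this, sub_eq_zero]
      exact hab
    obtain ⟨x, hx⟩ := Ext.contravariant_sequence_exact₁ hS Y _ h hz
    have : α - β = 0 := by
      rw [← hx]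
      rcases m with _ | m
      · obtain ⟨f, rfl⟩ := Ext.mk₀_bijective _ _ |>.2 x
        rw [Ext.mk₀_comp_mk₀, h0, Ext.mk₀_zero]
      · rw [Ext.eq_zero_of_projective x, Ext.comp_zero]
    exact sub_eq_zero.1 this
  · intro β
    obtain ⟨mm, rfl⟩ : ∃ mm, n = mm + 1 := ⟨m, by omega⟩
    exact Ext.contravariant_sequence_exact₃ hS Y β (Ext.eq_zero_of_projective _) h

/-- the basis classes `1, v, t, t v, t^2, ...` -/
def cls {X : C} (v : Ext X X 1) (t : Ext X X 2) : ∀ m : ℕ, Ext X X m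
  | 0 => Ext.mk₀ (𝟙 X)
  | 1 => v
  | m + 2 => t.comp (cls v t m) (by omega)

theorem v_comp_cls {X : C} (v : Ext X X 1) (t : Ext X X 2) 
    (hvv : v.comp v (show 1 + 1 = 2 by rfl) = 0)
    (hvt : v.comp t (show 1 + 2 = 3 by rfl) = t.comp v (show 2 + 1 = 3 by rfl)) :
    ∀ (b c : ℕ) (h : 1 + b = c), v.comp (cls v t b) h = if Odd b then 0 else cls v t c
  | 0, c, h => by
    obtain rfl : c = 1 := by omega
    simp [cls]
  | 1, c, h => by
    obtain rfl : c = 2 := by omega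
    simp [cls, hvv]
  | b + 2, c, h => by
    obtain ⟨c, rfl⟩ : ∃ cc, c = cc + 2 := ⟨c - 2, by omega⟩
    have ih := v_comp_cls v t hvv hvt b c (by omega)
    have e1 : v.comp (cls v t (b + 2)) h = t.comp (v.comp (cls v t b) (show 1 + b = c by omega)) 
        (show 2 + c = c + 2 by omega) := by
      rw [cls, ← Ext.comp_assoc v t (cls v t b) (show 1 + 2 = 3 by rfl) (by omega) (by omega), hvt,
        Ext.comp_assoc t v (cls v t b) (by rfl) (show 1 + b = c by omega) (by omega)]
    rw [e1, ih]
    by_cases hb : Odd b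
    · have : Odd (b + 2) := by grind
      simp [hb, this]
    · have : ¬ Odd (b + 2) := by grind
      simp [hb, this, cls]

theorem cls_comp_cls {X : C} (v : Ext X X 1) (t : Ext X X 2) 
    (hvv : v.comp v (show 1 + 1 = 2 by rfl) = 0)
    (hvt : v.comp t (show 1 + 2 = 3 by rfl) = t.comp v (show 2 + 1 = 3 by rfl)) :
    ∀ (a b c : ℕ) (h : a + b = c), (cls v t a).comp (cls v t b) h = 
      if Odd a ∧ Odd b then 0 else cls v t c
  | 0, b, c, h => by
    obtain rfl : c = b := by omega
    simp [cls]
  | 1, b, c, h => by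
    simpa [cls] using v_comp_cls v t hvv hvt b c h
  | a + 2, b, c, h => by
    obtain ⟨c, rfl⟩ : ∃ cc, c = cc + 2 := ⟨c - 2, by omega⟩
    have ih := cls_comp_cls v t hvv hvt a b c (by omega)
    have e1 : (cls v t (a + 2)).comp (cls v t b) h = 
        t.comp ((cls v t a).comp (cls v t b) (show a + b = c by omega)) 
        (show 2 + c = c + 2 by omega) := by
      rw [cls, Ext.comp_assoc t _ _ (by omega) (show a + b = c by omega) (by omega)]
    rw [e1, ih]
    by_cases hb : Odd a
    · have : Odd (a + 2) := by grind
      by_cases hbb : Odd b <;> simp [hb, hbb, this, cls]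
    · have : ¬ Odd (a + 2) := by grind
      simp [hb, this, cls]

theorem abs_main {R : Type*} [CommRing R] [Linear R C] {P X W : C} [Projective P]
    (i₁ : W ⟶ P) (π : P ⟶ X) (i₂ : X ⟶ P) (q : P ⟶ W) (w₁ : i₁ ≫ π = 0) (w₂ : i₂ ≫ q = 0)
    (h₁ : (ShortComplex.mk i₁ π w₁).ShortExact) (h₂ : (ShortComplex.mk i₂ q w₂).ShortExact)
    (φ : W ⟶ X) (ψ : X ⟶ W) (u : P ⟶ P)
    (hφ : q ≫ φ = π) (hψ : ψ ≫ i₁ = i₂) (hφu : φ ≫ i₂ = i₁ ≫ u) (hψu : π ≫ ψ = u ≫ q)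
    (hψφ : ψ ≫ φ = 0) (z₁ : ∀ f : P ⟶ X, i₁ ≫ f = 0) (z₂ : ∀ f : P ⟶ X, i₂ ≫ f = 0)
    (J : Set R) (hX : ∀ f : X ⟶ X, ∃ r : R, f = r • 𝟙 X) (hX0 : ∀ r : R, r • 𝟙 X = 0 → r ∈ J)
    (hW : ∀ f : W ⟶ X, ∃ r : R, f = r • φ) (hW0 : ∀ r : R, r • φ = 0 → r ∈ J) :
    ∃ c : ∀ m, Ext X X m, c 0 = Ext.mk₀ (𝟙 X) ∧ (∀ m (α : Ext X X m), ∃ r : R, α = r • c m) ∧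
      (∀ m (r : R), r • c m = 0 → r ∈ J) ∧
      ∀ (a b m : ℕ) (h : a + b = m), (c a).comp (c b) h = if Odd a ∧ Odd b then 0 else c m := by
  let δ₁ : Ext X W 1 := h₁.extClass
  let δ₂ : Ext W X 1 := h₂.extClass
  have b₁ : ∀ (m n : ℕ) (h : 1 + m = n), 
      Function.Bijective (fun α : Ext W X m => δ₁.comp α h) := fun m n h => 
    haveI : Projective (ShortComplex.mk i₁ π w₁).X₂ := ‹_›
    precomp_extClass_bij h₁ X z₁ h
  have b₂ : ∀ (m n : ℕ) (h : 1 + m = n), 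
      Function.Bijective (fun α : Ext X X m => δ₂.comp α h) := fun m n h => 
    haveI : Projective (ShortComplex.mk i₂ q w₂).X₂ := ‹_›
    precomp_extClass_bij h₂ X z₂ h
  let t : Ext X X 2 := δ₁.comp δ₂ (by rfl)
  let v : Ext X X 1 := δ₁.comp (Ext.mk₀ φ) (by rfl)
  -- naturality
  have n₁ : δ₁.comp (Ext.mk₀ φ) (add_zero 1) = (Ext.mk₀ ψ).comp δ₂ (zero_add 1) := 
    ShortComplex.ShortExact.extClass_naturality h₁ h₂ 
      { τ₁ := φ, τ₂ := u, τ₃ := ψ, comm₁₂ := hφu, comm₂₃ := hψu.symm }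
  have n₂ : δ₂.comp (Ext.mk₀ ψ) (add_zero 1) = (Ext.mk₀ φ).comp δ₁ (zero_add 1) := 
    ShortComplex.ShortExact.extClass_naturality h₂ h₁
      { τ₁ := ψ, τ₂ := 𝟙 P, τ₃ := φ, comm₁₂ := by simpa using hψ, comm₂₃ := by simp [hφ] }
  have tt : ∀ (m n : ℕ) (h : 2 + m = n), 
      Function.Bijective (fun α : Ext X X m => t.comp α h) := by
    intro m n h
    have : (fun α : Ext X X m => t.comp α h) = (fun β => δ₁.comp β (show 1 + (m + 1) = n by omega)) ∘ 
        (fun α => δ₂.comp α (show 1 + m = m + 1 by omega)) := by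
      funext α
      exact Ext.comp_assoc δ₁ δ₂ α _ _ (by omega)
    rw [this]
    exact (b₁ _ _ _).comp (b₂ _ _ _)
  have key : v.comp δ₁ (show 1 + 1 = 2 by rfl) = t.comp (Ext.mk₀ ψ) (add_zero 2) := by
    change (δ₁.comp (Ext.mk₀ φ) _).comp δ₁ _ = (δ₁.comp δ₂ _).comp (Ext.mk₀ ψ) _
    rw [Ext.comp_assoc_of_second_deg_zero, ← n₂, Ext.comp_assoc_of_third_deg_zero]
  have hvv : v.comp v (show 1 + 1 = 2 by rfl) = 0 := by
    change v.comp (δ₁.comp (Ext.mk₀ φ) _) _ = 0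
    rw [← Ext.comp_assoc_of_third_deg_zero, key, Ext.comp_assoc_of_third_deg_zero, 
      Ext.mk₀_comp_mk₀, hψφ, Ext.mk₀_zero, Ext.comp_zero]
  have hvt : v.comp t (show 1 + 2 = 3 by rfl) = t.comp v (show 2 + 1 = 3 by rfl) := by
    change v.comp (δ₁.comp δ₂ _) _ = t.comp (δ₁.comp (Ext.mk₀ φ) _) _
    rw [n₁, ← Ext.comp_assoc v δ₁ δ₂ (show 1 + 1 = 2 by rfl) _ (by rfl), key,
      Ext.comp_assoc_of_second_deg_zero]
  refine ⟨cls v t, rfl, ?_, ?_, cls_comp_cls v t hvv hvt⟩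
  · intro m
    induction m using Nat.strong_induction_on with
    | _ m ih =>
      match m, ih with
      | 0, _ =>
        intro α
        obtain ⟨f, rfl⟩ := Ext.mk₀_bijective _ _ |>.2 α
        obtain ⟨r, rfl⟩ := hX f
        exact ⟨r, by rw [Ext.mk₀_smul, cls]⟩
      | 1, _ =>
        intro α
        obtain ⟨β, rfl⟩ := (b₁ 0 1 rfl).2 α
        obtain ⟨f, rfl⟩ := Ext.mk₀_bijective _ _ |>.2 β
        obtain ⟨r, rfl⟩ := hW f
        exact ⟨r, by simp only [Ext.mk₀_smul, cls, Ext.comp_smul]; rfl⟩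
      | m + 2, ih =>
        intro α
        obtain ⟨β, rfl⟩ := (tt m (m + 2) (by omega)).2 α
        obtain ⟨r, rfl⟩ := ih m (by omega) β
        exact ⟨r, by simp only [cls, Ext.comp_smul]⟩
  · intro m
    induction m using Nat.strong_induction_on with
    | _ m ih =>
      match m, ih with
      | 0, _ =>
        intro r hr
        rw [cls, ← Ext.mk₀_smul, Ext.mk₀_eq_zero_iff] at hr
        exact hX0 r hr
      | 1, _ =>
        intro r hr
        have : δ₁.comp (Ext.mk₀ (r • φ)) (show 1 + 0 = 1 by rfl) = 
            δ₁.comp 0 (show 1 + 0 = 1 by rfl) := by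
          rw [Ext.comp_zero, Ext.mk₀_smul, Ext.comp_smul]
          exact hr
        have := (b₁ 0 1 rfl).1 this
        rw [Ext.mk₀_eq_zero_iff] at this
        exact hW0 r this
      | m + 2, ih =>
        intro r hr
        apply ih m (by omega)
        apply (tt m (m + 2) (by omega)).1
        simp only [Ext.comp_zero, Ext.comp_smul]
        exact hr

end Abs

section Mod
universe w
open Abelian

theorem exists_factor {R M N L : Type*} [CommRing R] [AddCommGroup M] [AddCommGroup N]
    [AddCommGroup L] [Module R M] [Module R N] [Module R L] (p : M →ₗ[R] N)
    (hp : Function.Surjective p) (f : M →ₗ[R] L) (h : ∀ m, p m = 0 → f m = 0) :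
    ∃ g : N →ₗ[R] L, ∀ m, g (p m) = f m := by
  refine ⟨((LinearMap.ker p).liftQ f (fun m hm => h m hm)) ∘ₗ
    (p.quotKerEquivOfSurjective hp).symm.toLinearMap, fun m => ?_⟩
  have : (p.quotKerEquivOfSurjective hp).symm (p m) = Submodule.Quotient.mk m := by
    rw [LinearEquiv.symm_apply_eq]
    rfl
  change ((LinearMap.ker p).liftQ f (fun m hm => h m hm)) ((p.quotKerEquivOfSurjective hp).symm (p m)) = f m
  rw [this]
  rfl

theorem mod_main {B A : Type} [CommRing B] [AddCommGroup A] [Module B A]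
    [HasExt.{w} (ModuleCat.{0} B)] (π : B →ₗ[B] A) (hπ : Function.Surjective π)
    (y w u : B) (hy : ∀ b, π b = 0 ↔ ∃ c, b = y * c) (hw : ∀ b, w * b = 0 ↔ π b = 0)
    (hyw : ∀ b, y * b = 0 ↔ ∃ c, b = w * c) (hu : y * u = w) (hπu : π u = 0) :
    ∃ c : ∀ m, Ext (ModuleCat.of B A) (ModuleCat.of B A) m,
      c 0 = Ext.mk₀ (𝟙 (ModuleCat.of B A)) ∧
      (∀ m (α : Ext (ModuleCat.of B A) (ModuleCat.of B A) m), ∃ r : B, α = r • c m) ∧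
      (∀ m (r : B), r • c m = 0 ↔ π r = 0) ∧
      ∀ (a b m : ℕ) (h : a + b = m), (c a).comp (c b) h = if Odd a ∧ Odd b then 0 else c m := by
  have hmul : ∀ b c, π (b * c) = b • π c := fun b c => by rw [← smul_eq_mul, map_smul]
  let W := LinearMap.range (LinearMap.mulLeft B y)
  let q : B →ₗ[B] W := (LinearMap.mulLeft B y).rangeRestrict
  have hq : Function.Surjective q := LinearMap.surjective_rangeRestrict _
  have hqv : ∀ b, (q b : B) = y * b := fun b => rfl
  have hq0 : ∀ b, q b = 0 ↔ ∃ c, b = w * c := fun b => by rw [← hyw, ← hqv, Submodule.coe_eq_zero]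
  have hπw : π w = 0 := (hy w).2 ⟨u, hu.symm⟩
  obtain ⟨i₂, hi₂⟩ := exists_factor π hπ (LinearMap.mulLeft B w) (fun m hm => (hw m).2 hm)
  obtain ⟨φ, hφ⟩ := exists_factor q hq π (fun m hm => by
    obtain ⟨c, rfl⟩ := (hq0 m).1 hm
    rw [mul_comm, hmul, hπw, smul_zero])
  obtain ⟨ψ, hψ⟩ := exists_factor π hπ (q ∘ₗ LinearMap.mulLeft B u) (fun m hm => by
    obtain ⟨c, rfl⟩ := (hy m).1 hm
    refine (hq0 _).2 ⟨c, ?_⟩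
    simp only [LinearMap.mulLeft_apply]
    rw [← hu]; ring)
  simp only [LinearMap.mulLeft_apply, LinearMap.comp_apply] at hi₂ hψ
  have hinj : Function.Injective i₂ := by
    rw [injective_iff_map_eq_zero]
    intro a ha
    obtain ⟨b, rfl⟩ := hπ a
    rw [hi₂] at ha
    exact (hw b).1 ha
  have hyA : ∀ a : A, y • a = 0 := fun a => by
    obtain ⟨b, rfl⟩ := hπ a
    rw [← hmul, hy]; exact ⟨b, rfl⟩
  have hwA : ∀ a : A, w • a = 0 := fun a => by
    rw [← hu, mul_comm, mul_smul, hyA, smul_zero]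
  have : Projective (ModuleCat.of B B) := by
    rw [← IsProjective.iff_projective]; infer_instance
  have w₁ : ModuleCat.ofHom W.subtype ≫ ModuleCat.ofHom π = 0 := by
    ext x
    obtain ⟨b, rfl⟩ := hq x
    exact (hy _).2 ⟨b, rfl⟩
  have w₂ : ModuleCat.ofHom i₂ ≫ ModuleCat.ofHom q = 0 := by
    refine ModuleCat.hom_ext (LinearMap.ext fun x => ?_)
    obtain ⟨b, rfl⟩ := hπ x
    change q (i₂ (π b)) = 0
    rw [hi₂, hq0]
    exact ⟨b, rfl⟩
  have h₁ : (ShortComplex.mk _ _ w₁).ShortExact :=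
    { exact := by
        rw [ShortComplex.moduleCat_exact_iff]
        intro x hx
        obtain ⟨c, rfl⟩ := (hy x).1 hx
        exact ⟨q c, rfl⟩
      mono_f := (ModuleCat.mono_iff_injective _).2 Subtype.val_injective
      epi_g := (ModuleCat.epi_iff_surjective _).2 hπ }
  have h₂ : (ShortComplex.mk _ _ w₂).ShortExact :=
    { exact := by
        rw [ShortComplex.moduleCat_exact_iff]
        intro x hx
        obtain ⟨c, rfl⟩ := (hq0 x).1 hx
        exact ⟨π c, hi₂ c⟩
      mono_f := (ModuleCat.mono_iff_injective _).2 hinj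
      epi_g := (ModuleCat.epi_iff_surjective _).2 hq }
  have main := abs_main (R := B) (ModuleCat.ofHom W.subtype) (ModuleCat.ofHom π)
    (ModuleCat.ofHom i₂) (ModuleCat.ofHom q) w₁ w₂ h₁ h₂ (ModuleCat.ofHom φ) (ModuleCat.ofHom ψ)
    (ModuleCat.ofHom (LinearMap.mulLeft B u))
    (ModuleCat.hom_ext (LinearMap.ext fun b => hφ b))
    (by
      ext x
      obtain ⟨b, rfl⟩ := hπ x
      change (ψ (π b) : B) = i₂ (π b)
      rw [hψ, hi₂, hqv, ← hu, mul_assoc])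
    (by
      ext x
      obtain ⟨b, rfl⟩ := hq x
      change i₂ (φ (q b)) = u * (q b : B)
      rw [hφ, hi₂, hqv, ← hu]; ring)
    (ModuleCat.hom_ext (LinearMap.ext fun b => hψ b))
    (by
      ext x
      obtain ⟨b, rfl⟩ := hπ x
      change φ (ψ (π b)) = 0
      rw [hψ, hφ, mul_comm, hmul, hπu, smul_zero])
    (by
      intro f
      ext x
      obtain ⟨b, rfl⟩ := hq x
      change f.hom (q b : B) = 0
      rw [hqv, ← smul_eq_mul, map_smul]
      exact hyA _)
    (by
      intro f
      ext x
      obtain ⟨b, rfl⟩ := hπ x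
      change f.hom (i₂ (π b)) = 0
      rw [hi₂, ← smul_eq_mul, map_smul]
      exact hwA _)
    {r | π r = 0}
    (by
      intro f
      obtain ⟨r, hr⟩ := hπ (f.hom (π 1))
      refine ⟨r, ?_⟩
      ext x
      obtain ⟨b, rfl⟩ := hπ x
      change f.hom (π b) = r • π b
      rw [← hmul, mul_comm, hmul, hr, ← map_smul, ← hmul, mul_one])
    (by
      intro r hr
      have : r • π 1 = 0 := congrArg (fun f : ModuleCat.of B A ⟶ ModuleCat.of B A => f.hom (π 1)) hr
      rwa [← hmul, mul_one] at this)
    (by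
      intro f
      obtain ⟨r, hr⟩ := hπ (f.hom (q 1))
      refine ⟨r, ?_⟩
      ext x
      obtain ⟨b, rfl⟩ := hq x
      change f.hom (q b) = r • φ (q b)
      rw [hφ, ← hmul, mul_comm, hmul, hr, ← map_smul, ← map_smul, smul_eq_mul, mul_one])
    (by
      intro r hr
      have : r • φ (q 1) = 0 := 
        congrArg (fun f : ModuleCat.of B W ⟶ ModuleCat.of B A => f.hom (q 1)) hr
      rwa [hφ, ← hmul, mul_one] at this)
  obtain ⟨c, c0, c1, c2, c3⟩ := main
  refine ⟨c, c0, c1, fun m r => ⟨c2 m r, fun hr => ?_⟩, c3⟩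
  rw [Ext.smul_eq_comp_mk₀]
  have : r • 𝟙 (ModuleCat.of B A) = 0 := by
    ext x
    obtain ⟨b, rfl⟩ := hπ x
    change r • π b = 0
    rw [← hmul, mul_comm, hmul, hr, smul_zero]
  rw [this, Ext.mk₀_zero, Ext.comp_zero]

end Mod

section Alg

variable (K : Type) [Field K] (N : ℕ)

/-- the generator of `A`. -/
def xA : A K N := AdjoinRoot.root _

theorem xA_pow : xA K N ^ N = 0 := by
  have := AdjoinRoot.eval₂_root ((X : K[X]) ^ N)
  simpa [xA] using this

theorem aeval_surj (a : A K N) : ∃ P : K[X], a = aeval (xA K N) P := by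
  obtain ⟨P, rfl⟩ := AdjoinRoot.mk_surjective a
  exact ⟨P, (AdjoinRoot.aeval_eq P).symm⟩

theorem fin_A : Module.Finite K (A K N) := (monic_X_pow N).finite_adjoinRoot

/-- coefficient of `x^(N-1)` -/
def topCoeff : A K N →ₗ[K] K :=
  (lcoeff K (N - 1)) ∘ₗ (AdjoinRoot.modByMonicHom (monic_X_pow (R := K) N))

theorem topCoeff_pow (i : ℕ) (hi : i < N) : 
    topCoeff K N (xA K N ^ i) = if i = N - 1 then 1 else 0 := by
  have h1 : xA K N ^ i = AdjoinRoot.mk _ ((X : K[X]) ^ i) := by simp [xA]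
  rw [h1, topCoeff, LinearMap.comp_apply, AdjoinRoot.modByMonicHom_mk,
    (modByMonic_eq_self_iff (monic_X_pow N)).2 (by simpa using hi)]
  simp [coeff_X_pow, eq_comm]

/-- the map `a ⊗ b ↦ topCoeff b • a`. -/
def sg : B K N →ₗ[K] A K N :=
  TensorProduct.lift ((LinearMap.lsmul K (A K N)).flip.compl₂ (topCoeff K N))

theorem sg_tmul (a b : A K N) : sg K N (a ⊗ₜ b) = topCoeff K N b • a := by
  simp [sg]

theorem sg_mul (a : A K N) (b : B K N) : sg K N ((a ⊗ₜ 1) * b) = a * sg K N b := by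
  induction b using TensorProduct.induction_on with
  | zero => simp
  | tmul c d => simp [sg_tmul]
  | add c d hc hd => rw [mul_add, map_add, hc, hd, map_add, mul_add]

/-- `x ⊗ 1 - 1 ⊗ x` -/
def yB : B K N := xA K N ⊗ₜ 1 - 1 ⊗ₜ xA K N

/-- `∑ x^i ⊗ x^(N-1-i)` -/
def wB : B K N := 
  ∑ i ∈ Finset.range N, (xA K N ⊗ₜ 1 : B K N) ^ i * (1 ⊗ₜ xA K N : B K N) ^ (N - 1 - i)

theorem sg_wB (hN : 1 ≤ N) : sg K N (wB K N) = 1 := by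
  rw [wB, map_sum, Finset.sum_eq_single 0]
  · simp [sg_tmul, topCoeff_pow K N (N - 1) (by omega), Algebra.TensorProduct.tmul_pow]
  · intro i hi h0
    have := Finset.mem_range.1 hi
    simp [sg_tmul, Algebra.TensorProduct.tmul_pow, topCoeff_pow K N (N - 1 - i) (by omega)]
    intro h
    omega
  · intro h
    simp at h
    omega

theorem wB_yB : wB K N * yB K N = 0 := by
  rw [wB, yB, (Commute.all _ _).geom_sum₂_mul]
  simp [Algebra.TensorProduct.tmul_pow, xA_pow]

/-- the multiplication map -/
def piB : B K N →ₗ[B K N] A K N := Algebra.linearMap (B K N) (A K N)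

theorem piB_tmul (a b : A K N) : piB K N (a ⊗ₜ b) = a * b := 
  Algebra.TensorProduct.lmul'_apply_tmul a b

theorem piB_mul (a b : B K N) : piB K N (a * b) = piB K N a * piB K N b :=
  map_mul (algebraMap (B K N) (A K N)) a b

theorem piB_pow (a : B K N) (n : ℕ) : piB K N (a ^ n) = piB K N a ^ n :=
  map_pow (algebraMap (B K N) (A K N)) a n

theorem piB_surj : Function.Surjective (piB K N) := fun a => 
  ⟨a ⊗ₜ 1, by rw [piB_tmul, mul_one]⟩

theorem piB_y : piB K N (yB K N) = 0 := by
  rw [yB, map_sub, piB_tmul, piB_tmul, mul_one, one_mul, sub_self]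

theorem y_dvd (c : A K N) : yB K N ∣ (c ⊗ₜ 1 : B K N) - 1 ⊗ₜ c := by
  obtain ⟨P, rfl⟩ := aeval_surj K N c
  have h1 : ((aeval (xA K N) P) ⊗ₜ 1 : B K N) = aeval (xA K N ⊗ₜ 1 : B K N) P :=
    (aeval_algHom_apply (Algebra.TensorProduct.includeLeft (S := K) : A K N →ₐ[K] B K N) _ P).symm
  have h2 : (1 ⊗ₜ (aeval (xA K N) P) : B K N) = aeval (1 ⊗ₜ xA K N : B K N) P :=
    (aeval_algHom_apply (Algebra.TensorProduct.includeRight : A K N →ₐ[K] B K N) _ P).symm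
  rw [h1, h2, yB, aeval_def, aeval_def, ← Polynomial.eval_map, ← Polynomial.eval_map]
  exact sub_dvd_eval_sub _ _ _

theorem decomp (b : B K N) : yB K N ∣ b - (piB K N b) ⊗ₜ 1 := by
  induction b using TensorProduct.induction_on with
  | zero => simp
  | tmul c d =>
    rw [piB_tmul]
    have : (c ⊗ₜ d : B K N) - (c * d) ⊗ₜ 1 = (c ⊗ₜ 1) * (-((d ⊗ₜ 1) - 1 ⊗ₜ d)) := by
      rw [neg_sub, mul_sub]
      simp
    rw [this]
    exact Dvd.dvd.mul_left ((dvd_neg).2 (y_dvd K N d)) _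
  | add c d hc hd =>
    have := dvd_add hc hd
    convert this using 1
    rw [map_add, TensorProduct.add_tmul]
    ring

theorem hy (b : B K N) : piB K N b = 0 ↔ ∃ c, b = yB K N * c := by
  constructor
  · intro h
    have := decomp K N b
    rwa [h, TensorProduct.zero_tmul, sub_zero] at this
  · rintro ⟨c, rfl⟩
    rw [piB_mul, piB_y, zero_mul]

theorem hw (hN : 1 ≤ N) (b : B K N) : wB K N * b = 0 ↔ piB K N b = 0 := by
  constructor
  · intro h
    obtain ⟨d, hd⟩ := decomp K N b
    have h2 : (piB K N b ⊗ₜ 1) * wB K N = 0 := by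
      have : (piB K N b ⊗ₜ 1 : B K N) = b - yB K N * d := by rw [← hd]; ring
      rw [this, sub_mul, mul_comm b, h]
      linear_combination -d * wB_yB K N
    have := congrArg (sg K N) h2
    rwa [sg_mul, sg_wB K N hN, mul_one, map_zero] at this
  · intro h
    obtain ⟨c, rfl⟩ := (hy K N b).1 h
    rw [← mul_assoc, wB_yB, zero_mul]

theorem hyw (hN : 1 ≤ N) (b : B K N) : yB K N * b = 0 ↔ ∃ c, b = wB K N * c := by
  have := fin_A K N
  let T := LinearMap.mulLeft K (yB K N)
  let S := LinearMap.mulLeft K (wB K N)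
  let Q : B K N →ₗ[K] A K N := (Algebra.TensorProduct.lmul' K (S := A K N)).toLinearMap
  have hQ : ∀ b, Q b = piB K N b := fun b => rfl
  have e1 : LinearMap.range T = LinearMap.ker Q := by
    ext b
    rw [LinearMap.mem_ker, hQ, hy]
    exact ⟨fun ⟨c, hc⟩ => ⟨c, hc.symm⟩, fun ⟨c, hc⟩ => ⟨c, hc.symm⟩⟩
  have e2 : LinearMap.ker S = LinearMap.ker Q := by
    ext b
    rw [LinearMap.mem_ker, LinearMap.mem_ker, hQ, ← hw K N hN]
    rfl
  have r1 := LinearMap.finrank_range_add_finrank_ker T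
  have r2 := LinearMap.finrank_range_add_finrank_ker S
  rw [e1] at r1
  rw [e2] at r2
  have le : LinearMap.range S ≤ LinearMap.ker T := by
    rintro _ ⟨c, rfl⟩
    change yB K N * (wB K N * c) = 0
    linear_combination c * wB_yB K N
  have eq := Submodule.eq_of_le_of_finrank_eq le (by omega)
  have : b ∈ LinearMap.range S ↔ b ∈ LinearMap.ker T := by rw [eq]
  exact this.symm.trans ⟨fun ⟨c, hc⟩ => ⟨c, hc.symm⟩, fun ⟨c, hc⟩ => ⟨c, hc.symm⟩⟩

theorem geom_identity (p k : ℕ) (hp : p.Prime) [CharP K p] :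
    (∑ i ∈ Finset.range (k * p), (MvPolynomial.X 0 : MvPolynomial (Fin 2) K) ^ i *
        MvPolynomial.X 1 ^ (k * p - 1 - i)) = 
      (MvPolynomial.X 0 - MvPolynomial.X 1) * ((MvPolynomial.X 0 - MvPolynomial.X 1) ^ (p - 2) *
      (∑ i ∈ Finset.range k, (MvPolynomial.X 0 : MvPolynomial (Fin 2) K) ^ i *
        MvPolynomial.X 1 ^ (k - 1 - i)) ^ p) := by
  have := Fact.mk hp
  have hne : (MvPolynomial.X 0 - MvPolynomial.X 1 : MvPolynomial (Fin 2) K) ≠ 0 := by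
    rw [sub_ne_zero]
    intro h
    exact absurd (MvPolynomial.X_injective h) (by decide)
  apply mul_right_cancel₀ hne
  rw [(Commute.all _ _).geom_sum₂_mul, pow_mul, pow_mul, ← sub_pow_char,
    ← (Commute.all _ _).geom_sum₂_mul, mul_pow]
  obtain ⟨r, rfl⟩ : ∃ r, p = r + 2 := ⟨p - 2, by have := hp.two_le; omega⟩
  simp only [Nat.add_sub_cancel]
  ring

theorem exists_u (p k : ℕ) (hp : p.Prime) (hp2 : p ≠ 2) [CharP K p] :
    ∃ u, yB K (k * p) * u = wB K (k * p) ∧ piB K (k * p) u = 0 := by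
  have h := congrArg (MvPolynomial.aeval 
    ![(xA K (k * p) ⊗ₜ 1 : B K (k * p)), (1 ⊗ₜ xA K (k * p) : B K (k * p))]) (geom_identity K p k hp)
  simp only [map_sum, map_mul, map_pow, map_sub, MvPolynomial.aeval_X, Matrix.cons_val_zero,
    Matrix.cons_val_one] at h
  refine ⟨_, h.symm, ?_⟩
  have := hp.two_le
  rw [piB_mul, piB_pow]
  have h2 := piB_y K (k * p)
  rw [yB] at h2
  rw [h2, zero_pow (by omega), zero_mul]

end Alg

section RSide

variable (K : Type) [Field K] (N : ℕ)

/-- class of a variable in the quotient -/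
def gen (i : Fin 3) : R K N := Ideal.Quotient.mkₐ K (I K N) (MvPolynomial.X i)

theorem gen0_pow : gen K N 0 ^ N = 0 := by
  rw [gen, ← map_pow]
  exact Ideal.Quotient.eq_zero_iff_mem.2 (Ideal.subset_span (by simp))

theorem gen1_pow : gen K N 1 ^ 2 = 0 := by
  rw [gen, ← map_pow]
  exact Ideal.Quotient.eq_zero_iff_mem.2 (Ideal.subset_span (by simp))

/-- `A → R`, `x ↦ x`. -/
def th : A K N →ₐ[K] R K N :=
  AdjoinRoot.liftAlgHom _ (Algebra.ofId K (R K N)) (gen K N 0) (by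
    simp [gen0_pow])

theorem th_x : th K N (xA K N) = gen K N 0 := by
  simp [th, xA]

/-- the basis classes `v^ε t^j` of `R`. -/
def dR (m : ℕ) : R K N := gen K N 1 ^ (m % 2) * gen K N 2 ^ (m / 2)

theorem dR_zero : dR K N 0 = 1 := by simp [dR]

theorem dR_mul (a b : ℕ) : dR K N a * dR K N b = if Odd a ∧ Odd b then 0 else dR K N (a + b) := by
  have e : dR K N a * dR K N b = 
      gen K N 1 ^ (a % 2 + b % 2) * gen K N 2 ^ (a / 2 + b / 2) := by
    simp only [dR]; ring
  rw [e]
  split_ifs with h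
  · rw [Nat.odd_iff, Nat.odd_iff] at h
    rw [h.1, h.2, gen1_pow, zero_mul]
  · rw [Nat.odd_iff, Nat.odd_iff] at h
    rw [dR, show a % 2 + b % 2 = (a + b) % 2 by omega, show a / 2 + b / 2 = (a + b) / 2 by omega]

theorem th_dR_mem (m : ℕ) (a : A K N) : th K N a * dR K N m ∈ G K N m := by
  obtain ⟨P, rfl⟩ := aeval_surj K N a
  rw [← aeval_algHom_apply, th_x, aeval_eq_sum_range, Finset.sum_mul]
  refine Submodule.sum_mem _ fun i _ => ?_
  rw [smul_mul_assoc]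
  refine Submodule.smul_mem _ _ ⟨MvPolynomial.X 0 ^ i * 
    (MvPolynomial.X 1 ^ (m % 2) * MvPolynomial.X 2 ^ (m / 2)), ?_, ?_⟩
  · have h0 := (MvPolynomial.isWeightedHomogeneous_X K (![0, 1, 2] : Fin 3 → ℕ) 0).pow i
    have h1 := (MvPolynomial.isWeightedHomogeneous_X K (![0, 1, 2] : Fin 3 → ℕ) 1).pow (m % 2)
    have h2 := (MvPolynomial.isWeightedHomogeneous_X K (![0, 1, 2] : Fin 3 → ℕ) 2).pow (m / 2)
    have := h0.mul (h1.mul h2)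
    rw [SetLike.mem_coe, MvPolynomial.mem_weightedHomogeneousSubmodule]
    convert this using 1
    simp
    omega
  · simp only [AlgHom.toLinearMap_apply, map_mul, map_pow]
    rfl

theorem th_dR_surj (m : ℕ) (g : R K N) (hg : g ∈ G K N m) : ∃ a, th K N a * dR K N m = g := by
  obtain ⟨P, hP, rfl⟩ := hg
  rw [SetLike.mem_coe, MvPolynomial.mem_weightedHomogeneousSubmodule] at hP
  let Q : Submodule K (R K N) := 
    LinearMap.range ((LinearMap.mulRight K (dR K N m)) ∘ₗ (th K N).toLinearMap)
  suffices h : (Ideal.Quotient.mkₐ K (I K N)).toLinearMap P ∈ Q by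
    obtain ⟨a, ha⟩ := h
    exact ⟨a, ha⟩
  rw [P.as_sum, map_sum]
  refine Submodule.sum_mem _ fun s hs => ?_
  have hwt := hP (MvPolynomial.mem_support_iff.1 hs)
  have hwtt : s 1 + 2 * s 2 = m := by
    rw [Finsupp.weight_apply, Finsupp.sum_fintype _ _ (by simp), Fin.sum_univ_three] at hwt
    simp at hwt
    omega
  have hm : MvPolynomial.monomial s (P.coeff s) = (P.coeff s) • (MvPolynomial.X 0 ^ s 0 * 
      (MvPolynomial.X 1 ^ s 1 * MvPolynomial.X 2 ^ s 2) : MvPolynomial (Fin 3) K) := by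
    rw [MvPolynomial.monomial_eq, Finsupp.prod_fintype _ _ (by simp), Fin.prod_univ_three,
      MvPolynomial.smul_eq_C_mul]
    ring
  rw [hm, map_smul]
  refine Submodule.smul_mem _ _ ?_
  have e : (Ideal.Quotient.mkₐ K (I K N)).toLinearMap (MvPolynomial.X 0 ^ s 0 * 
      (MvPolynomial.X 1 ^ s 1 * MvPolynomial.X 2 ^ s 2)) =
      gen K N 0 ^ s 0 * (gen K N 1 ^ s 1 * gen K N 2 ^ s 2) := by
    simp only [AlgHom.toLinearMap_apply, map_mul, map_pow]
    rfl
  rw [e]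
  by_cases h : 2 ≤ s 1
  · rw [pow_eq_zero_of_le h (gen1_pow K N), zero_mul, mul_zero]
    exact Submodule.zero_mem _
  · refine ⟨xA K N ^ s 0, ?_⟩
    simp only [LinearMap.comp_apply, LinearMap.mulRight_apply, AlgHom.toLinearMap_apply, map_pow,
      th_x, dR]
    rw [show m % 2 = s 1 by omega, show m / 2 = s 2 by omega]

/-- detecting map `R → A[ε][T]`. -/
def det : R K N →ₐ[K] (DualNumber (A K N))[X] :=
  Ideal.Quotient.liftₐ (I K N) (MvPolynomial.aeval 
    ![C (algebraMap (A K N) (DualNumber (A K N)) (xA K N)), C (DualNumber.eps), X]) (by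
    have : I K N ≤ RingHom.ker (MvPolynomial.aeval (R := K)
      ![C (algebraMap (A K N) (DualNumber (A K N)) (xA K N)), C (DualNumber.eps), X]) := by
      rw [I, Ideal.span_le]
      rintro x (rfl | rfl)
      · simp only [SetLike.mem_coe, RingHom.mem_ker, map_pow, MvPolynomial.aeval_X]
        simp [← map_pow, xA_pow]
      · simp only [SetLike.mem_coe, RingHom.mem_ker, map_pow, MvPolynomial.aeval_X]
        simp [pow_two, ← C_mul]
    exact fun a ha => this ha)

theorem det_gen (i : Fin 3) : det K N (gen K N i) = 
    (![C (algebraMap (A K N) (DualNumber (A K N)) (xA K N)), C (DualNumber.eps), X] : Fin 3 → _) i := by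
  have : det K N (gen K N i) = MvPolynomial.aeval (R := K)
    ![C (algebraMap (A K N) (DualNumber (A K N)) (xA K N)), C (DualNumber.eps), X] 
      (MvPolynomial.X i) := rfl
  rw [this, MvPolynomial.aeval_X]

theorem det_th (a : A K N) : det K N (th K N a) = C (algebraMap (A K N) (DualNumber (A K N)) a) := by
  obtain ⟨P, rfl⟩ := aeval_surj K N a
  rw [← aeval_algHom_apply, th_x, ← aeval_algHom_apply, det_gen]
  have := aeval_algHom_apply ((Algebra.ofId (DualNumber (A K N)) (DualNumber (A K N))[X]).restrictScalars K |>.comp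
    ((Algebra.ofId (A K N) (DualNumber (A K N))).restrictScalars K)) (xA K N) P
  exact this

theorem th_dR_inj (m : ℕ) (a : A K N) (h : th K N a * dR K N m = 0) : a = 0 := by
  have h1 := congrArg (det K N) h
  rw [dR, map_mul, map_mul, map_pow, map_pow, det_th, det_gen, det_gen, map_zero] at h1
  have h2 := congrArg (fun P => P.coeff (m / 2)) h1
  simp only [Matrix.cons_val_one, Matrix.cons_val_zero, Matrix.cons_val, ← map_pow, ← mul_assoc, 
    ← map_mul, coeff_C_mul, coeff_X_pow_self, coeff_zero, mul_one] at h2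
  rcases Nat.mod_two_eq_zero_or_one m with h3 | h3
  · rw [h3, pow_zero, mul_one] at h2
    exact congrArg TrivSqZeroExt.fst h2
  · rw [h3, pow_one] at h2
    have := congrArg TrivSqZeroExt.snd h2
    simpa [TrivSqZeroExt.algebraMap_eq_inl] using this

end RSide

theorem exists_addEquiv {F E H : Type*} [AddCommGroup F] [AddCommGroup E] [AddCommGroup H]
    (f : F →+ E) (g : F →+ H) (hf : Function.Surjective f) (hg : Function.Surjective g)
    (h : ∀ r, f r = 0 ↔ g r = 0) : ∃ e : E ≃+ H, ∀ r, e (f r) = g r := by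
  have hk : f.ker = g.ker := by
    ext r
    exact h r
  refine ⟨((QuotientAddGroup.quotientKerEquivOfSurjective f hf).symm.trans
    (QuotientAddGroup.quotientAddEquivOfEq hk)).trans
    (QuotientAddGroup.quotientKerEquivOfSurjective g hg), fun r => ?_⟩
  have : (QuotientAddGroup.quotientKerEquivOfSurjective f hf).symm (f r) = (r : F ⧸ f.ker) := by
    rw [AddEquiv.symm_apply_eq]
    rfl
  simp only [AddEquiv.trans_apply]
  rw [this]
  rfl

/-- for a field `K` of odd prime characteristic `p` and `A = K[x]/(x^{kp})`
with `k ≥ 1`, the graded ring `HH^*(A;A) = ⊕ₘ Ext^m_B(A,A)` with the Yoneda (composition)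
product is isomorphic as a graded ring to `K[x,v,t]/(x^{kp}, v²)` with `x, v, t` in
degrees `0, 1, 2`. -/
theorem stmt10 (K : Type) [Field K] (p : ℕ) (hp : p.Prime) (hp2 : p ≠ 2) [CharP K p]
    (k : ℕ) (hk : 1 ≤ k) :
    ∃ e : ∀ m : ℕ, Abelian.Ext (M K (k * p)) (M K (k * p)) m ≃+ G K (k * p) m,
      ((e 0 (Abelian.Ext.mk₀ (𝟙 (M K (k * p)))) : R K (k * p)) = 1) ∧
      ∀ (a b : ℕ) (α : Abelian.Ext (M K (k * p)) (M K (k * p)) a)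
        (β : Abelian.Ext (M K (k * p)) (M K (k * p)) b),
        ((e (a + b) (α.comp β rfl) : R K (k * p)) =
          (e a α : R K (k * p)) * (e b β : R K (k * p))) := by
  have hN : 1 ≤ k * p := Nat.mul_pos hk hp.pos
  obtain ⟨u, hu, hπu⟩ := exists_u K p k hp hp2
  generalize k * p = N at *
  obtain ⟨c, c0, c1, c2, c3⟩ := mod_main (piB K N) (piB_surj K N) (yB K N) (wB K N) u
    (hy K N) (hw K N hN) (hyw K N hN) hu hπu
  let π : B K N →+* A K N := algebraMap (B K N) (A K N)
  have hπ : Function.Surjective π := piB_surj K N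
  let f : ∀ m : ℕ, B K N →+ Abelian.Ext (M K N) (M K N) m := fun m =>
    { toFun := fun r => r • c m
      map_zero' := zero_smul _ _
      map_add' := fun r s => add_smul _ _ _ }
  let g : ∀ m : ℕ, B K N →+ G K N m := fun m =>
    { toFun := fun r => ⟨th K N (π r) * dR K N m, th_dR_mem K N m _⟩
      map_zero' := by ext; simp
      map_add' := fun r s => by ext; simp [add_mul] }
  have hg : ∀ m r, (g m r : R K N) = th K N (π r) * dR K N m := fun m r => rfl
  have key : ∀ m, ∃ e : Abelian.Ext (M K N) (M K N) m ≃+ G K N m, ∀ r, e (f m r) = g m r := by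
    intro m
    apply exists_addEquiv
    · intro α
      obtain ⟨r, hr⟩ := c1 m α
      exact ⟨r, hr.symm⟩
    · rintro ⟨x, hx⟩
      obtain ⟨a, rfl⟩ := th_dR_surj K N m x hx
      obtain ⟨r, rfl⟩ := hπ a
      exact ⟨r, rfl⟩
    · intro r
      rw [← Submodule.coe_eq_zero, hg]
      refine (c2 m r).trans ⟨fun h => ?_, fun h => th_dR_inj K N m _ h⟩
      have hh : π r = 0 := h
      rw [hh, map_zero, zero_mul]
  choose e he using key
  refine ⟨e, ?_, ?_⟩
  · have h1 : Abelian.Ext.mk₀ (𝟙 (M K N)) = f 0 1 := by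
      change _ = (1 : B K N) • c 0
      rw [c0, one_smul]
      rfl
    rw [h1, he, hg, map_one, map_one, dR_zero, mul_one]
  · intro a b α β
    obtain ⟨r, hr⟩ := c1 a α
    obtain ⟨s, hs⟩ := c1 b β
    have hα : α = f a r := hr
    have hβ : β = f b s := hs
    have hmul : (f a r).comp (f b s) rfl = if Odd a ∧ Odd b then 0 else f (a + b) (r * s) := by
      change (r • c a).comp (s • c b) rfl = if Odd a ∧ Odd b then 0 else (r * s) • c (a + b)
      rw [Abelian.Ext.smul_comp, Abelian.Ext.comp_smul, c3 a b (a + b) rfl]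
      split_ifs with h
      · rw [smul_zero, smul_zero]
      · rw [mul_smul]
    have hd := dR_mul K N a b
    rw [hα, hβ, hmul, he, he, hg, hg, mul_mul_mul_comm, hd]
    split_ifs with h
    · rw [map_zero, mul_zero]; rfl
    · rw [he, hg, map_mul, map_mul]

end
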